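/- For all integers i and r with 1 ≤ r ≤ i + 2n − 2, one has h_i^{(r)}(x_1,…,x_n) − x_1·h_i^{(r−1)}(x_1,…,x_n) = h_{i+1}^{(r−1)}(x_2,…,x_n), where the right-hand side is the analogous quantity built from the n−1 variables x_2,…,x_n (so its recursion uses the coefficients a(i+n−2), b(i+n−2)). -/

import Mathlib

open Polynomial Matrix Finset

noncomputable section

variable {K L : Type*} [Field K] [Field L]

/-- The orthogonal-polynomial sequence: `φ₀ = 1`, `φ₁ = z - a 0`,
`φ_{i+1} = (z - a i)·φ_i - b i·φ_{i-1}` (so `φ_{-1} = 0`). -/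
def phi (a b : ℤ → K) : ℕ → Polynomial K
  | 0 => 1
  | 1 => Polynomial.X - Polynomial.C (a 0)
  | (i+2) => (Polynomial.X - Polynomial.C (a (i+1))) * phi a b (i+1)
      - Polynomial.C (b (i+1)) * phi a b i

/-- `φ` with integer index, `0` for negative index. -/
def phiZ (a b : ℤ → K) (m : ℤ) : Polynomial K :=
  if m < 0 then 0 else phi a b m.toNat

/-- Generalized Schur polynomial `S_λ(y₁,…,y_m|a,b)
  = det(φ_{λ_j+m-j}(y_i)) / ∏_{i<j}(y_i - y_j)` (indices here 0-based). -/
def genS (a b : ℤ → K) (c : K →+* L) {m : ℕ} (y : Fin m → L) (lam : Fin m → ℕ) : L :=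
  Matrix.det (Matrix.of fun i j : Fin m =>
      (phi a b (lam j + (m - 1 - (j : ℕ)))).eval₂ c (y i)) /
    ∏ i : Fin m, ∏ j ∈ Finset.Ioi i, (y i - y j)

/-- `h_i = S_{(i)}` for `i ≥ 0`, and `h_i = 0` for `i < 0`. -/
def genh (a b : ℤ → K) (c : K →+* L) {m : ℕ} (y : Fin m → L) (i : ℤ) : L :=
  if i < 0 then 0 else genS a b c y (fun j => if (j : ℕ) = 0 then i.toNat else 0)

/-- `h_i^{(0)} = h_i`, `h_i^{(r+1)} = h_{i+1}^{(r)} + a(i+m-1)h_i^{(r)} + b(i+m-1)h_{i-1}^{(r)}`. -/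
def genhr (a b : ℤ → K) (c : K →+* L) {m : ℕ} (y : Fin m → L) : ℕ → ℤ → L
  | 0, i => genh a b c y i
  | (r+1), i => genhr a b c y r (i+1) + c (a (i + m - 1)) * genhr a b c y r i
      + c (b (i + m - 1)) * genhr a b c y r (i-1)

/-- The field `F = K(x₁,…,x_n)`. -/
abbrev Fn (K : Type*) [Field K] (n : ℕ) := FractionRing (MvPolynomial (Fin n) K)

/-- The embedding `K → K(x₁,…,x_n)`. -/
def cK (K : Type*) [Field K] (n : ℕ) : K →+* Fn K n :=
  (algebraMap (MvPolynomial (Fin n) K) (Fn K n)).comp MvPolynomial.C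

/-- The variables `x₁,…,x_n` as elements of `K(x₁,…,x_n)`. -/
def xv (K : Type*) [Field K] (n : ℕ) (i : Fin n) : Fn K n :=
  algebraMap (MvPolynomial (Fin n) K) (Fn K n) (MvPolynomial.X i)

/-- The product `∏_{i<j} (y i - y j)`. -/
def altVandermonde {R : Type*} [CommRing R] {m : ℕ} (y : Fin m → R) : R :=
  ∏ i : Fin m, ∏ j ∈ Finset.Ioi i, (y i - y j)

lemma altVandermonde_succ {R : Type*} [CommRing R] {m : ℕ} (y : Fin (m + 1) → R) :
    altVandermonde y = (∏ j : Fin m, (y 0 - y j.succ)) * altVandermonde (fun j => y j.succ) := by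
  simp [altVandermonde, Fin.prod_univ_succ, Fin.prod_Ioi_succ]

lemma altVandermonde_eq_det_rev {R : Type*} [CommRing R] {m : ℕ} (y : Fin m → R) :
    altVandermonde y = (vandermonde (fun i => y i.rev)).det := by
  have key : ∀ f : Fin m → Fin m → R,
      ∏ i : Fin m, ∏ j ∈ Finset.Ioi i, f i j
        = ∏ i : Fin m, ∏ j : Fin m, if i < j then f i j else 1 := by
    intro f
    refine Finset.prod_congr rfl fun i _ => ?_
    rw [← Finset.prod_filter]
    congr 1
    ext j
    simp
  rw [altVandermonde, det_vandermonde, key, key, Finset.prod_comm,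
    ← Equiv.prod_comp Fin.revPerm]
  refine Finset.prod_congr rfl fun i _ => ?_
  rw [← Equiv.prod_comp Fin.revPerm]
  simp [Fin.rev_lt_rev]

lemma altVandermonde_ne_zero {m : ℕ} {y : Fin m → L} (hy : Function.Injective y) :
    altVandermonde y ≠ 0 := by
  refine Finset.prod_ne_zero_iff.mpr fun i _ => Finset.prod_ne_zero_iff.mpr fun j hj => ?_
  exact sub_ne_zero.mpr (hy.ne (Finset.mem_Ioi.mp hj).ne)

lemma phi_monic_natDegree (a b : ℤ → K) :
    ∀ i : ℕ, (phi a b i).Monic ∧ (phi a b i).natDegree = i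
  | 0 => by simp [phi]
  | 1 => by
    rw [phi]
    exact ⟨monic_X_sub_C _, natDegree_X_sub_C _⟩
  | i + 2 => by
    obtain ⟨hm0, hd0⟩ := phi_monic_natDegree a b i
    obtain ⟨hm1, hd1⟩ := phi_monic_natDegree a b (i + 1)
    have hm : ((X - C (a (i + 1))) * phi a b (i + 1)).Monic := (monic_X_sub_C _).mul hm1
    have hd : ((X - C (a (i + 1))) * phi a b (i + 1)).natDegree = i + 2 := by
      rw [(monic_X_sub_C _).natDegree_mul hm1, natDegree_X_sub_C, hd1]
      omega
    have hlt : (C (b (i + 1)) * phi a b i).natDegree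
        < ((X - C (a (i + 1))) * phi a b (i + 1)).natDegree := by
      rw [hd]
      exact (natDegree_C_mul_le _ _).trans_lt (by omega)
    rw [phi]
    refine ⟨hm.sub_of_left (degree_lt_degree hlt), ?_⟩
    rw [natDegree_sub_eq_left_of_natDegree_lt hlt, hd]

/-- The three-term recurrence, solved for `z·φ_i`. -/
lemma eval₂_phi_succ_succ (a b : ℤ → K) (c : K →+* L) (i : ℕ) (z : L) :
    (phi a b (i + 2)).eval₂ c z + c (a (i + 1)) * (phi a b (i + 1)).eval₂ c z
        + c (b (i + 1)) * (phi a b i).eval₂ c z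
      = z * (phi a b (i + 1)).eval₂ c z := by
  rw [phi]
  simp only [eval₂_sub, eval₂_mul, eval₂_X, eval₂_C]
  ring

lemma det_phi_rev (a b : ℤ → K) (c : K →+* L) {m : ℕ} (y : Fin m → L) :
    (Matrix.of fun i j : Fin m => (phi a b (m - 1 - (j : ℕ))).eval₂ c (y i)).det
      = altVandermonde y := by
  rw [altVandermonde_eq_det_rev,
    det_eval_matrixOfPolynomials_eq_det_vandermonde (fun i : Fin m => y i.rev)
      (fun j => (phi a b j).map c)
      (fun j => by rw [natDegree_map, (phi_monic_natDegree a b j).2])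
      (fun j => (phi_monic_natDegree a b j).1.map c),
    ← det_submatrix_equiv_self Fin.revPerm]
  congr 1
  ext i j
  simp only [submatrix_apply, of_apply, eval_map, Fin.revPerm_apply, Fin.val_rev]
  congr 2
  have := j.2
  omega

/-- The numerator of the divided difference of `f` at the points `y`. -/
def divDiffNum {m : ℕ} (f : L → L) (y : Fin (m + 1) → L) : L :=
  ∑ i : Fin (m + 1), (-1) ^ (i : ℕ) * f (y i) * altVandermonde (fun j => y (i.succAbove j))

lemma divDiffNum_sub_mul {m : ℕ} (f : L → L) (y : Fin (m + 2) → L) :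
    divDiffNum (fun z => z * f z) y - y 0 * divDiffNum f y
      = (∏ j : Fin (m + 1), (y 0 - y j.succ)) * divDiffNum f (fun j => y j.succ) := by
  simp only [divDiffNum]
  rw [Finset.mul_sum, ← Finset.sum_sub_distrib, Fin.sum_univ_succ, Finset.mul_sum]
  have h0 : ∀ t : L, (-1) ^ ((0 : Fin (m + 2)) : ℕ) * (y 0 * f (y 0)) * t
      - y 0 * ((-1) ^ ((0 : Fin (m + 2)) : ℕ) * f (y 0) * t) = 0 := fun t => by ring
  rw [h0, zero_add]
  refine Finset.sum_congr rfl fun i _ => ?_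
  rw [altVandermonde_succ, Fin.prod_univ_succAbove _ i]
  simp only [Fin.succ_succAbove_zero, Fin.succ_succAbove_succ, Fin.val_succ, pow_succ]
  ring

/-- The determinant in the definition of `h_i` with its first column replaced by `f`. -/
lemma det_first_column (a b : ℤ → K) (c : K →+* L) {m : ℕ} (f : L → L) (y : Fin (m + 1) → L) :
    (Matrix.of fun i j : Fin (m + 1) =>
      if (j : ℕ) = 0 then f (y i) else (phi a b (m - (j : ℕ))).eval₂ c (y i)).det
      = divDiffNum f y := by
  rw [det_succ_column_zero, divDiffNum]
  refine Finset.sum_congr rfl fun i _ => ?_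
  rw [← det_phi_rev a b c]
  congr 2
  ext p q
  simp only [submatrix_apply, of_apply, Fin.val_succ]
  rw [if_neg (by omega)]
  congr 2
  omega

lemma genh_natCast (a b : ℤ → K) (c : K →+* L) {m : ℕ} (y : Fin (m + 1) → L) (i : ℕ) :
    genh a b c y (i : ℤ)
      = divDiffNum (fun z => (phi a b (i + m)).eval₂ c z) y / altVandermonde y := by
  rw [genh, if_neg (by omega), genS, ← det_first_column a b c, altVandermonde]
  congr 2
  ext p q
  simp only [of_apply, Int.toNat_natCast, Nat.add_sub_cancel]
  split_ifs with h
  · simp [h]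
  · simp

lemma genh_of_neg (a b : ℤ → K) (c : K →+* L) {m : ℕ} (y : Fin m → L) {i : ℤ} (hi : i < 0) :
    genh a b c y i = 0 := if_pos hi

lemma genh_zero (a b : ℤ → K) (c : K →+* L) {m : ℕ} {y : Fin m → L}
    (hy : Function.Injective y) : genh a b c y 0 = 1 := by
  have h := det_phi_rev a b c y
  rw [genh, if_neg (lt_irrefl _), genS, ← altVandermonde]
  simp only [Int.toNat_zero, ite_self, zero_add, h]
  exact div_self (altVandermonde_ne_zero hy)

lemma divDiffNum_phi_eq_zero (a b : ℤ → K) (c : K →+* L) {m : ℕ} (y : Fin (m + 2) → L) :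
    divDiffNum (fun z => (phi a b m).eval₂ c z) y = 0 := by
  rw [← det_first_column a b c]
  refine det_zero_of_column_eq (i := 0) (j := 1) (by simp) fun k => ?_
  simp

lemma divDiffNum_phi_recurrence (a b : ℤ → K) (c : K →+* L) {m : ℕ} (y : Fin (m + 1) → L)
    (k : ℕ) :
    divDiffNum (fun z => (phi a b (k + 2)).eval₂ c z) y
        + c (a (k + 1)) * divDiffNum (fun z => (phi a b (k + 1)).eval₂ c z) y
        + c (b (k + 1)) * divDiffNum (fun z => (phi a b k).eval₂ c z) y
      = divDiffNum (fun z => z * (phi a b (k + 1)).eval₂ c z) y := by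
  simp only [divDiffNum, Finset.mul_sum, ← Finset.sum_add_distrib, ← eval₂_phi_succ_succ]
  exact Finset.sum_congr rfl fun i _ => by ring

/-- `h_{i-1}` as a divided difference, including the vanishing value at `i = 0`. -/
lemma genh_natCast_sub_one (a b : ℤ → K) (c : K →+* L) {m : ℕ} (y : Fin (m + 2) → L) (i : ℕ) :
    genh a b c y ((i : ℤ) - 1)
      = divDiffNum (fun z => (phi a b (i + m)).eval₂ c z) y / altVandermonde y := by
  cases i with
  | zero => rw [genh_of_neg _ _ _ _ (by simp), Nat.zero_add, divDiffNum_phi_eq_zero, zero_div]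
  | succ i =>
    rw [Nat.cast_succ, add_sub_cancel_right, genh_natCast,
      show i + (m + 1) = i + 1 + m by omega]

lemma genh_shift (a b : ℤ → K) (c : K →+* L) {m : ℕ} {y : Fin (m + 2) → L}
    (hy : Function.Injective y) (i : ℤ) :
    genh a b c y (i + 1) + c (a (i + m + 1)) * genh a b c y i
        + c (b (i + m + 1)) * genh a b c y (i - 1) - y 0 * genh a b c y i
      = genh a b c (fun j : Fin (m + 1) => y j.succ) (i + 1) := by
  have hy' : Function.Injective fun j : Fin (m + 1) => y j.succ :=
    hy.comp (Fin.succ_injective _)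
  rcases lt_or_ge i 0 with hi | hi
  · rw [genh_of_neg _ _ _ _ hi, genh_of_neg _ _ _ _ (show i - 1 < 0 by omega)]
    rcases (show i = -1 ∨ i + 1 < 0 by omega) with rfl | hi
    · simp [genh_zero _ _ _ hy, genh_zero _ _ _ hy']
    · simp [genh_of_neg _ _ _ _ hi]
  · lift i to ℕ using hi
    have hrec := divDiffNum_phi_recurrence a b c y (i + m)
    have hsub := divDiffNum_sub_mul (fun z => (phi a b (i + m + 1)).eval₂ c z) y
    have hne := altVandermonde_ne_zero hy
    have hne' := altVandermonde_ne_zero hy'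
    have hV := altVandermonde_succ y
    rw [genh_natCast_sub_one, genh_natCast, ← Nat.cast_succ, genh_natCast, genh_natCast,
      show i.succ + (m + 1) = i + m + 2 by omega, show i + (m + 1) = i + m + 1 by omega,
      show i.succ + m = i + m + 1 by omega]
    rw [← hrec] at hsub
    push_cast at hsub
    rw [eq_div_iff hne']
    have hprod : ∏ j : Fin (m + 1), (y 0 - y j.succ) ≠ 0 := by
      rintro h
      exact hne (by rw [hV, h, zero_mul])
    apply mul_left_cancel₀ hprod
    rw [← hsub, mul_left_comm, ← hV]
    field_simp

/-- The shift relation holds for every index when the points are distinct. -/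
lemma genhr_shift (a b : ℤ → K) (c : K →+* L) {m : ℕ} {y : Fin (m + 2) → L}
    (hy : Function.Injective y) (r : ℕ) (i : ℤ) :
    genhr a b c y (r + 1) i - y 0 * genhr a b c y r i
      = genhr a b c (fun j : Fin (m + 1) => y j.succ) r (i + 1) := by
  induction r generalizing i with
  | zero =>
    simp only [genhr]
    rw [← genh_shift a b c hy i, show i + ((m + 2 : ℕ) : ℤ) - 1 = i + m + 1 by push_cast; ring]
  | succ r ih =>
    have hidx : i + 1 + ((m + 1 : ℕ) : ℤ) - 1 = i + ((m + 2 : ℕ) : ℤ) - 1 := by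
      push_cast
      ring
    have hprev := ih (i - 1)
    rw [sub_add_cancel] at hprev
    rw [genhr, genhr.eq_2 a b c (fun j : Fin (m + 1) => y j.succ), hidx, add_sub_cancel_right,
      ← ih (i + 1), ← ih i, ← hprev, genhr.eq_2 a b c y i r]
    ring

lemma xv_injective (K : Type*) [Field K] (n : ℕ) : Function.Injective (xv K n) :=
  (IsFractionRing.injective (MvPolynomial (Fin n) K) (Fn K n)).comp (MvPolynomial.X_injective)

/-- **The key Lemma.** For `1 ≤ r ≤ i + 2n - 2`,
`h_i^{(r)}(x_1,…,x_n) - x_1·h_i^{(r-1)}(x_1,…,x_n) = h_{i+1}^{(r-1)}(x_2,…,x_n)`,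
where the right-hand side is built from the `n-1` variables `x_2,…,x_n`. -/
theorem genhr_shift_lemma (K : Type*) [Field K] (a b : ℤ → K) (n : ℕ) (hn : 2 ≤ n)
    (i : ℤ) (r : ℕ) (hr1 : 1 ≤ r) (hr2 : (r : ℤ) ≤ i + 2 * n - 2) :
    genhr a b (cK K n) (xv K n) r i
        - xv K n ⟨0, by omega⟩ * genhr a b (cK K n) (xv K n) (r - 1) i
      = genhr a b (cK K n)
          (fun j : Fin (n - 1) => xv K n ⟨(j : ℕ) + 1, by have := j.2; omega⟩)
          (r - 1) (i + 1) := by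
  obtain ⟨m, rfl⟩ : ∃ m, n = m + 2 := ⟨n - 2, by omega⟩
  obtain ⟨s, rfl⟩ : ∃ s, r = s + 1 := ⟨r - 1, by omega⟩
  exact genhr_shift a b (cK K (m + 2)) (xv_injective K (m + 2)) s i
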